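/- Let κ > 0 satisfy P(R ≥ κ) > 0 and P(R = κ) = 0. Then P(Y_t ≥ κt) = Q·D_I^{(1)}(κ)·t^{−(γ−1)}·(1+o(1)) as t → ∞, where D_I^{(1)}(κ) := (κ^{−γ}/γ)·E[R^γ·1{R ≥ κ}] + ((2−γ)·κ^{1−γ}/((γ−1)γ))·E[R^{γ−1}·1{R ≥ κ}]. -/

import Mathlib

open MeasureTheory Filter Set
open scoped ENNReal NNReal Topology

noncomputable section

/-- `ℓ_t(s,u)`: the length of the interval `[s,s+u] ∩ [0,t]`. -/
def ellK (t s u : ℝ) : ℝ := max 0 (min (s + u) t - max s 0)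

/-- The intensity measure `u^{-γ-1} du` on `(0,∞)`. -/
def muU (γ : ℝ) : Measure ℝ :=
  (volume.restrict (Set.Ioi 0)).withDensity fun u => ENNReal.ofReal (u ^ (-γ - 1))

/-- The measure `μ^ℓ_t` on `(0,∞)`:
`μ^ℓ_t(A) = ∫_ℝ ∫_0^∞ 1{ℓ_t(s,u) ∈ A} u^{-γ-1} du ds`. -/
def muEll (γ t : ℝ) : Measure ℝ :=
  (Measure.map (fun p : ℝ × ℝ => ellK t p.1 p.2)
    ((volume : Measure ℝ).prod (muU γ))).restrict (Set.Ioi 0)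

/-- The measure `μ^{ℓ,r}_t` on `(0,∞)`:
`μ^{ℓ,r}_t(A) = ∫_{(0,∞)} ∫_{(0,∞)} 1{rℓ ∈ A} μ^ℓ_t(dℓ) F_R(dr)`. -/
def muEllR (γ t : ℝ) (FR : Measure ℝ) : Measure ℝ :=
  (Measure.map (fun p : ℝ × ℝ => p.1 * p.2) (FR.prod (muEll γ t))).restrict (Set.Ioi 0)

/-- The measure `ν` on `[0,1]`: density `s^{-(γ+1)} + ((2-γ)/γ)·s^{-γ}` on `(0,1)` with
respect to Lebesgue measure, together with an atom of mass `1/(γ(γ-1))` at the point `1`. -/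
def nuM (γ : ℝ) : Measure ℝ :=
  (volume.restrict (Set.Ioo 0 1)).withDensity
      (fun s => ENNReal.ofReal (s ^ (-(γ + 1)) + (2 - γ) / γ * s ^ (-γ)))
    + (Real.toNNReal (1 / (γ * (γ - 1)))) • Measure.dirac 1

instance nuM.sigmaFinite (γ : ℝ) : SigmaFinite (nuM γ) := by
  unfold nuM; infer_instance

end

/-!
The jumps of `Y_t` scale: dilating by `t` carries `muEllR γ 1 FR` to `t ^ (γ - 1) • muEllR γ t FR`,
so `Y_t / t` is infinitely divisible with Lévy measure `ε • π`, where `π = muEllR γ 1 FR` and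
`ε = Q * t ^ (1 - γ) → 0`. Asymptotically one big jump decides: `ε⁻¹ * P(Y_t / t ∈ F) → π F` for
every `π`-continuity set `F` away from the origin. Since `π` may have infinite mass near `0`, all
measures are first damped by `1 - exp (-v ^ 2 / 2)`. The characteristic function of a damped
measure is a Gaussian average of second differences of the original characteristic function, so it
converges after division by `ε`, Lévy's continuity theorem gives weak convergence, and on `F` the
damping can be undone because it is bounded below there.
-/

open ProbabilityTheory

section WeakConvergence

variable {ι : Type*} {l : Filter ι}

theorem finiteMeasure_tendsto_of_tendsto_charFun [l.IsCountablyGenerated] {E : Type*}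
    [NormedAddCommGroup E] [InnerProductSpace ℝ E] [FiniteDimensional ℝ E] [MeasurableSpace E]
    [BorelSpace E] {ρ : ι → FiniteMeasure E} {ρ₀ : FiniteMeasure E}
    (h : ∀ ξ, Tendsto (fun i => charFun (ρ i : Measure E) ξ) l (𝓝 (charFun (ρ₀ : Measure E) ξ))) :
    Tendsto ρ l (𝓝 ρ₀) := by
  have hmass : Tendsto (fun i => (ρ i).mass) l (𝓝 ρ₀.mass) := by
    rw [← NNReal.tendsto_coe]
    have hre := (Complex.continuous_re.tendsto _).comp (h 0)
    simp only [Function.comp_def, charFun_zero, Complex.ofReal_re] at hre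
    exact hre
  rcases eq_or_ne ρ₀ 0 with rfl | hρ₀
  · exact FiniteMeasure.tendsto_zero_of_tendsto_zero_mass (by simpa using hmass)
  refine FiniteMeasure.tendsto_of_tendsto_normalize_testAgainstNN_of_tendsto_mass ?_ hmass
  have hmass₀ : ρ₀.mass ≠ 0 := ρ₀.mass_nonzero_iff.2 hρ₀
  have charFun_normalize : ∀ {ν : FiniteMeasure E}, ν ≠ 0 → ∀ ξ,
      charFun (ν.normalize : Measure E) ξ = ν.mass⁻¹ • charFun (ν : Measure E) ξ := by
    intro ν hν ξ
    rw [ν.toMeasure_normalize_eq_of_nonzero hν, charFun_apply, charFun_apply,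
      integral_smul_nnreal_measure]
  refine tendsto_of_seq_tendsto fun u hu => ?_
  refine ProbabilityMeasure.tendsto_of_tendsto_charFun fun ξ => ?_
  rw [charFun_normalize hρ₀]
  refine (((hmass.inv₀ hmass₀).smul (h ξ)).comp hu).congr' ?_
  filter_upwards [hu.eventually (hmass.eventually_ne hmass₀)] with n hn
  exact (charFun_normalize ((ρ (u n)).mass_nonzero_iff.1 hn) ξ).symm

variable {X : Type*} [MeasurableSpace X] [TopologicalSpace X] [OpensMeasurableSpace X]
  {ρ : ι → FiniteMeasure X} {ρ₀ : FiniteMeasure X}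

theorem finiteMeasure_tendsto_measure_of_null_frontier [HasOuterApproxClosed X]
    (h : Tendsto ρ l (𝓝 ρ₀)) {F : Set X} (hF : (ρ₀ : Measure X) (frontier F) = 0) :
    Tendsto (fun i => (ρ i : Measure X) F) l (𝓝 ((ρ₀ : Measure X) F)) := by
  simp only [← FiniteMeasure.ennreal_coeFn_eq_coeFn_toMeasure, ENNReal.tendsto_coe,
    ENNReal.coe_eq_zero] at hF ⊢
  rcases eq_or_ne ρ₀ 0 with rfl | hρ₀
  · exact tendsto_of_tendsto_of_tendsto_of_le_of_le tendsto_const_nhds (by simpa using h.mass)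
      (fun _ => zero_le) (fun i => (ρ i).apply_le_mass F)
  have : Nonempty X :=
    not_isEmpty_iff.1 fun _ => hρ₀ (Subtype.ext (Measure.eq_zero_of_isEmpty _))
  have hnormalize : ρ₀.normalize (frontier F) = 0 := by
    rw [ρ₀.normalize_eq_of_nonzero hρ₀, hF, mul_zero]
  simp only [FiniteMeasure.self_eq_mass_mul_normalize _ F]
  exact h.mass.mul <| ProbabilityMeasure.tendsto_measure_of_null_frontier_of_tendsto
    (FiniteMeasure.tendsto_normalize_of_tendsto h hρ₀) hnormalize

theorem finiteMeasure_tendsto_setLIntegral_of_null_frontier [HasOuterApproxClosed X]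
    (h : Tendsto ρ l (𝓝 ρ₀)) (g : BoundedContinuousFunction X ℝ≥0) {F : Set X}
    (hFm : MeasurableSet F) (hF : (ρ₀ : Measure X) (frontier F) = 0) :
    Tendsto (fun i => ∫⁻ x in F, g x ∂(ρ i : Measure X)) l
      (𝓝 (∫⁻ x in F, g x ∂(ρ₀ : Measure X))) := by
  have hg : Measurable fun x => (g x : ℝ≥0∞) := g.continuous.measurable.coe_nnreal_ennreal
  let weighted (ν : FiniteMeasure X) : FiniteMeasure X :=
    ⟨(ν : Measure X).withDensity fun x => g x,
      isFiniteMeasure_withDensity (g.lintegral_lt_top_of_nnreal ν).ne⟩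
  have hweighted : Tendsto (fun i => weighted (ρ i)) l (𝓝 (weighted ρ₀)) := by
    rw [FiniteMeasure.tendsto_iff_forall_lintegral_tendsto] at h ⊢
    intro f
    simpa [weighted, lintegral_withDensity_eq_lintegral_mul _ hg
      f.continuous.measurable.coe_nnreal_ennreal] using h (g * f)
  simpa [weighted, withDensity_apply _ hFm] using
    finiteMeasure_tendsto_measure_of_null_frontier hweighted
      (withDensity_absolutelyContinuous _ _ hF)

end WeakConvergence

section LevyExponent

/-- The weight `min |v| v²` whose integrability makes the fully compensated Lévy exponent
converge. -/
noncomputable def levyGauge (v : ℝ) : ℝ := min |v| (v ^ 2)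

/-- The Lévy exponent of a pure-jump infinitely divisible law with Lévy measure `π`, compensated
at all jump sizes. -/
noncomputable def levyExponent (π : Measure ℝ) (θ : ℝ) : ℂ :=
  ∫ v, (Complex.exp (θ * v * Complex.I) - 1 - θ * v * Complex.I) ∂π

lemma levyGauge_nonneg (v : ℝ) : 0 ≤ levyGauge v := le_min (abs_nonneg v) (sq_nonneg v)

lemma levyGauge_mul_le (θ v : ℝ) : levyGauge (θ * v) ≤ (|θ| + θ ^ 2) * levyGauge v := by
  rw [levyGauge, levyGauge, mul_min_of_nonneg _ _ (by positivity), abs_mul, mul_pow]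
  gcongr
  · exact le_add_of_nonneg_right (sq_nonneg θ)
  · exact le_add_of_nonneg_left (abs_nonneg θ)

lemma norm_exp_mul_I_sub_one_sub_le (x : ℝ) :
    ‖Complex.exp (x * Complex.I) - 1 - x * Complex.I‖ ≤ 2 * levyGauge x := by
  rw [levyGauge, mul_min_of_nonneg _ _ zero_le_two]
  have hlinear : ‖Complex.exp (x * Complex.I) - 1 - x * Complex.I‖ ≤ 2 * |x| :=
    calc ‖Complex.exp (x * Complex.I) - 1 - x * Complex.I‖
        ≤ ‖Complex.exp (x * Complex.I) - 1‖ + ‖x * Complex.I‖ := norm_sub_le _ _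
      _ ≤ |x| + |x| := by
        gcongr
        · simpa [mul_comm] using Real.norm_exp_I_mul_ofReal_sub_one_le (x := x)
        · simp
      _ = 2 * |x| := (two_mul _).symm
  refine le_min hlinear ?_
  rcases le_total |x| 1 with hx | hx
  · have hquad := Complex.norm_exp_sub_one_sub_id_le (x := x * Complex.I) (by simpa using hx)
    rw [norm_mul, Complex.norm_I, mul_one, Complex.norm_real, Real.norm_eq_abs, sq_abs] at hquad
    linarith [sq_nonneg x]
  · exact hlinear.trans (by nlinarith [sq_abs x])

lemma norm_levyExponent_integrand_le (θ v : ℝ) :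
    ‖Complex.exp (θ * v * Complex.I) - 1 - θ * v * Complex.I‖
      ≤ 2 * (|θ| + θ ^ 2) * levyGauge v := by
  rw [mul_assoc 2, ← Complex.ofReal_mul]
  exact (norm_exp_mul_I_sub_one_sub_le _).trans (by gcongr; exact levyGauge_mul_le θ v)

variable {π : Measure ℝ} (hπ : Integrable levyGauge π) (θ : ℝ)
include hπ

lemma integrable_levyExponent_integrand :
    Integrable (fun v : ℝ => Complex.exp (θ * v * Complex.I) - 1 - θ * v * Complex.I) π :=
  (hπ.const_mul _).mono' (by fun_prop) (ae_of_all _ (norm_levyExponent_integrand_le θ))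

lemma norm_levyExponent_le :
    ‖levyExponent π θ‖ ≤ 2 * (|θ| + θ ^ 2) * ∫ v, levyGauge v ∂π := by
  rw [← integral_const_mul]
  exact norm_integral_le_of_norm_le (hπ.const_mul _)
    (ae_of_all _ (norm_levyExponent_integrand_le θ))

lemma levyExponent_re_nonpos : (levyExponent π θ).re ≤ 0 := by
  have hre : (levyExponent π θ).re = ∫ v, (Real.cos (θ * v) - 1) ∂π := by
    rw [levyExponent, ← RCLike.re_eq_complex_re, ← integral_re
      (integrable_levyExponent_integrand hπ θ)]
    refine integral_congr_ae (ae_of_all _ fun v => ?_)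
    simp [← Complex.ofReal_mul, Complex.exp_ofReal_mul_I_re]
  rw [hre]
  exact integral_nonpos fun v => sub_nonpos.2 (Real.cos_le_one _)

end LevyExponent

section SecondDifference

lemma norm_exp_sub_one_le_of_re_nonpos {z : ℂ} (hz : z.re ≤ 0) : ‖Complex.exp z - 1‖ ≤ ‖z‖ := by
  have h := (convex_halfSpace_re_le 0).norm_image_sub_le_of_norm_deriv_le
    (f := Complex.exp) (C := 1) (fun _ _ => Complex.differentiableAt_exp)
    (fun w hw => by simpa [Complex.norm_exp] using hw) (show (0 : ℂ).re ≤ 0 by simp) hz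
  simpa using h

/-- Minus one half of the second difference, with step `a` at `θ`, of the characteristic function
of `m`. It sees the Lévy exponent of `m` in the same way, because the compensator is affine
in `θ`. -/
noncomputable def secondDifference (m : Measure ℝ) (θ a : ℝ) : ℂ :=
  ∫ v, ((1 - Real.cos (a * v) : ℝ) : ℂ) * Complex.exp (θ * v * Complex.I) ∂m

lemma secondDifference_integrand_eq (θ a v : ℝ) :
    ((1 - Real.cos (a * v) : ℝ) : ℂ) * Complex.exp (θ * v * Complex.I)
      = Complex.exp (θ * v * Complex.I) - (Complex.exp ((θ + a : ℝ) * v * Complex.I)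
        + Complex.exp ((θ - a : ℝ) * v * Complex.I)) / 2 := by
  have hadd : Complex.exp ((θ + a : ℝ) * v * Complex.I)
      = Complex.exp (θ * v * Complex.I) * Complex.exp (a * v * Complex.I) := by
    rw [← Complex.exp_add]; push_cast; ring_nf
  have hsub : Complex.exp ((θ - a : ℝ) * v * Complex.I)
      = Complex.exp (θ * v * Complex.I) * Complex.exp (-(a * v) * Complex.I) := by
    rw [← Complex.exp_add]; push_cast; ring_nf
  rw [hadd, hsub]
  push_cast
  rw [Complex.cos]
  ring

lemma norm_secondDifference_integrand (θ a v : ℝ) :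
    ‖((1 - Real.cos (a * v) : ℝ) : ℂ) * Complex.exp (θ * v * Complex.I)‖
      = 1 - Real.cos (a * v) := by
  rw [norm_mul, ← Complex.ofReal_mul, Complex.norm_exp_ofReal_mul_I, mul_one,
    Complex.norm_real, Real.norm_of_nonneg (sub_nonneg.2 (Real.cos_le_one _))]

lemma integrable_exp_mul_ofReal_mul_I (μ : Measure ℝ) [IsFiniteMeasure μ] (ξ : ℝ) :
    Integrable (fun v : ℝ => Complex.exp (ξ * v * Complex.I)) μ :=
  .of_bound (by fun_prop) 1 <| ae_of_all _ fun v => by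
    rw [← Complex.ofReal_mul, Complex.norm_exp_ofReal_mul_I]

lemma secondDifference_eq_charFun (μ : Measure ℝ) [IsFiniteMeasure μ] (θ a : ℝ) :
    secondDifference μ θ a
      = charFun μ θ - (charFun μ (θ + a) + charFun μ (θ - a)) / 2 := by
  have hint := integrable_exp_mul_ofReal_mul_I μ
  simp only [secondDifference, secondDifference_integrand_eq, charFun_apply_real]
  rw [integral_sub (hint θ) (((hint _).fun_add (hint _)).div_const 2), integral_div,
    integral_add (hint _) (hint _)]

lemma secondDifference_eq_levyExponent {π : Measure ℝ} (hπ : Integrable levyGauge π) (θ a : ℝ) :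
    secondDifference π θ a
      = levyExponent π θ - (levyExponent π (θ + a) + levyExponent π (θ - a)) / 2 := by
  have hint := integrable_levyExponent_integrand hπ
  simp only [levyExponent]
  rw [← integral_add (hint _) (hint _), ← integral_div,
    ← integral_sub (hint θ) (((hint _).fun_add (hint _)).div_const 2)]
  refine integral_congr_ae (ae_of_all _ fun v => ?_)
  simp only [secondDifference_integrand_eq]
  push_cast
  ring

lemma norm_secondDifference_le (m : Measure ℝ) (θ a : ℝ) :
    ‖secondDifference m θ a‖ ≤ ‖secondDifference m 0 a‖ := by
  refine (norm_integral_le_integral_norm _).trans_eq ?_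
  simp only [norm_secondDifference_integrand]
  simp only [secondDifference, Complex.ofReal_zero, zero_mul, Complex.exp_zero, mul_one]
  rw [integral_complex_ofReal,
    Complex.norm_of_nonneg (integral_nonneg fun v => sub_nonneg.2 (Real.cos_le_one _))]

end SecondDifference

section GaussianDamping

/-- The weight `1 - exp (-v² / 2)`, the mean of `1 - cos (a v)` over a standard Gaussian `a`. -/
noncomputable def gaussDefect (v : ℝ) : ℝ := 1 - Real.exp (-(v ^ 2) / 2)

/-- The measure `m` damped near the origin by `gaussDefect`; it is finite for every Lévy
measure `m`. -/
noncomputable def gaussDamped (m : Measure ℝ) : Measure ℝ :=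
  m.withDensity fun v => ENNReal.ofReal (gaussDefect v)

@[fun_prop]
lemma continuous_gaussDefect : Continuous gaussDefect := by unfold gaussDefect; fun_prop

lemma gaussDefect_nonneg (v : ℝ) : 0 ≤ gaussDefect v :=
  sub_nonneg.2 (Real.exp_le_one_iff.2 (by linarith [sq_nonneg v]))

lemma gaussDefect_pos {v : ℝ} (hv : v ≠ 0) : 0 < gaussDefect v :=
  sub_pos.2 (Real.exp_lt_one_iff.2 (by linarith [sq_pos_of_ne_zero hv]))

lemma gaussDefect_le_of_abs_le {u v : ℝ} (h : |u| ≤ |v|) : gaussDefect u ≤ gaussDefect v := by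
  have := sq_le_sq.2 h
  unfold gaussDefect
  gcongr

lemma gaussDefect_le_levyGauge (v : ℝ) : gaussDefect v ≤ levyGauge v := by
  have hexp := Real.add_one_le_exp (-(v ^ 2) / 2)
  have hpos := Real.exp_pos (-(v ^ 2) / 2)
  unfold gaussDefect
  refine le_min ?_ (by linarith [sq_nonneg v])
  rcases le_total |v| 1 with hv | hv
  · nlinarith [sq_abs v, abs_nonneg v]
  · linarith

variable {m : Measure ℝ}

lemma integrable_gaussDefect_of_isFiniteMeasure (m : Measure ℝ) [IsFiniteMeasure m] :
    Integrable gaussDefect m :=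
  .of_bound (by fun_prop) 1 <| ae_of_all _ fun v => by
    rw [Real.norm_of_nonneg (gaussDefect_nonneg v)]
    exact sub_le_self _ (Real.exp_pos _).le

lemma integrable_gaussDefect (hm : Integrable levyGauge m) : Integrable gaussDefect m :=
  hm.mono' (by fun_prop) <| ae_of_all _ fun v => by
    rw [Real.norm_of_nonneg (gaussDefect_nonneg v)]
    exact gaussDefect_le_levyGauge v

lemma isFiniteMeasure_gaussDamped (hm : Integrable gaussDefect m) :
    IsFiniteMeasure (gaussDamped m) :=
  isFiniteMeasure_withDensity_ofReal hm.2

lemma integral_one_sub_cos_gaussian (v : ℝ) :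
    ∫ a, (1 - Real.cos (a * v)) ∂gaussianReal 0 1 = gaussDefect v := by
  have hcos : ∫ a, Real.cos (a * v) ∂gaussianReal 0 1 = Real.exp (-(v ^ 2) / 2) := by
    have hint : Integrable (fun a : ℝ => Complex.exp (v * a * Complex.I)) (gaussianReal 0 1) :=
      integrable_exp_mul_ofReal_mul_I _ v
    have hre := congrArg Complex.re (charFun_gaussianReal (μ := 0) (v := 1) v)
    rw [charFun_apply_real, ← RCLike.re_eq_complex_re, ← integral_re hint] at hre
    convert! hre using 1
    · refine integral_congr_ae (ae_of_all _ fun a => ?_)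
      simp only [mul_comm a v]
      rw [RCLike.re_eq_complex_re, ← Complex.ofReal_mul, Complex.exp_ofReal_mul_I_re]
    · simp [Complex.exp_re, ← Complex.ofReal_pow, neg_div]
  rw [integral_sub (integrable_const 1) (.of_bound (by fun_prop) 1
    (ae_of_all _ fun a => Real.abs_cos_le_one _)), hcos]
  simp [gaussDefect]

lemma charFun_gaussDamped (m : Measure ℝ) (θ : ℝ) :
    charFun (gaussDamped m) θ
      = ∫ v, (gaussDefect v : ℂ) * Complex.exp (θ * v * Complex.I) ∂m := by
  rw [charFun_apply_real, gaussDamped, integral_withDensity_eq_integral_toReal_smul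
    (by fun_prop) (ae_of_all _ fun _ => ENNReal.ofReal_lt_top)]
  simp only [ENNReal.toReal_ofReal (gaussDefect_nonneg _), Complex.real_smul]

lemma integral_secondDifference_gaussian [SFinite m] (hm : Integrable gaussDefect m) (θ : ℝ) :
    ∫ a, secondDifference m θ a ∂gaussianReal 0 1 = charFun (gaussDamped m) θ := by
  have hmean (v : ℝ) :
      ∫ a, ((1 - Real.cos (a * v) : ℝ) : ℂ) * Complex.exp (θ * v * Complex.I) ∂gaussianReal 0 1
        = gaussDefect v * Complex.exp (θ * v * Complex.I) := by
    rw [integral_mul_const, integral_complex_ofReal, integral_one_sub_cos_gaussian]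
  have hint : Integrable (Function.uncurry fun a v : ℝ =>
      ((1 - Real.cos (a * v) : ℝ) : ℂ) * Complex.exp (θ * v * Complex.I))
      ((gaussianReal 0 1).prod m) := by
    refine (integrable_prod_iff' (by fun_prop)).2 ⟨ae_of_all _ fun v => ?_, ?_⟩
    · exact .of_bound (by fun_prop) 2 (ae_of_all _ fun a => by
        simp only [Function.uncurry_apply_pair, norm_secondDifference_integrand]
        linarith [Real.neg_one_le_cos (a * v)])
    · simpa only [Function.uncurry_apply_pair, norm_secondDifference_integrand,
        integral_one_sub_cos_gaussian] using hm
  simp only [secondDifference, charFun_gaussDamped]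
  rw [integral_integral_swap hint]
  simp only [hmean]

end GaussianDamping

section SmallTime

variable {ι : Type*} {l : Filter ι} {μ : ι → Measure ℝ} [∀ i, IsFiniteMeasure (μ i)]
  {π : Measure ℝ} {ε : ι → ℝ}

lemma tendsto_inv_mul_exp_sub_one (hε : Tendsto ε l (𝓝[>] 0)) (z : ℂ) :
    Tendsto (fun i => ((ε i)⁻¹ : ℂ) * (Complex.exp (ε i * z) - 1)) l (𝓝 z) := by
  have hderiv : HasDerivAt (fun s : ℝ => Complex.exp (s * z)) z 0 := by
    simpa using ((Complex.ofRealCLM.hasDerivAt (x := 0)).mul_const z).cexp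
  simpa [slope_def_module, Function.comp_def] using
    (hasDerivAt_iff_tendsto_slope.1 hderiv).comp
      (hε.mono_right (nhdsWithin_mono _ fun s (hs : 0 < s) => hs.ne'))

lemma tendsto_inv_mul_secondDifference (hε : Tendsto ε l (𝓝[>] 0))
    (hπ : Integrable levyGauge π)
    (hchar : ∀ᶠ i in l, ∀ θ, charFun (μ i) θ = Complex.exp (ε i * levyExponent π θ)) (θ a : ℝ) :
    Tendsto (fun i => ((ε i)⁻¹ : ℂ) * secondDifference (μ i) θ a) l
      (𝓝 (secondDifference π θ a)) := by
  rw [secondDifference_eq_levyExponent hπ]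
  have hlim (ξ : ℝ) := tendsto_inv_mul_exp_sub_one hε (levyExponent π ξ)
  refine ((hlim θ).sub (((hlim (θ + a)).add (hlim (θ - a))).div_const 2)).congr' ?_
  filter_upwards [hchar] with i hi
  rw [secondDifference_eq_charFun, hi, hi, hi]
  ring

lemma norm_secondDifference_le_of_charFun_eq_exp {μ : Measure ℝ} [IsFiniteMeasure μ]
    {ε : ℝ} (hε : 0 ≤ ε) (hπ : Integrable levyGauge π)
    (hchar : ∀ θ, charFun μ θ = Complex.exp (ε * levyExponent π θ)) (θ a : ℝ) :
    ‖secondDifference μ θ a‖ ≤ ε * (2 * (|a| + a ^ 2) * ∫ v, levyGauge v ∂π) := by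
  have hexp (ξ : ℝ) : ‖Complex.exp (ε * levyExponent π ξ) - 1‖
      ≤ ε * (2 * (|ξ| + ξ ^ 2) * ∫ v, levyGauge v ∂π) := by
    refine (norm_exp_sub_one_le_of_re_nonpos ?_).trans ?_
    · rw [Complex.re_ofReal_mul]
      exact mul_nonpos_of_nonneg_of_nonpos hε (levyExponent_re_nonpos hπ ξ)
    · rw [norm_mul, Complex.norm_of_nonneg hε]
      exact mul_le_mul_of_nonneg_left (norm_levyExponent_le hπ ξ) hε
  have hzero : levyExponent π 0 = 0 := by simp [levyExponent]
  calc ‖secondDifference μ θ a‖ ≤ ‖secondDifference μ 0 a‖ := norm_secondDifference_le _ _ _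
    _ = ‖(Complex.exp (ε * levyExponent π a) - 1)
          + (Complex.exp (ε * levyExponent π (-a)) - 1)‖ / 2 := by
        rw [secondDifference_eq_charFun, hchar, hchar, hchar, hzero, zero_add, zero_sub,
          mul_zero, Complex.exp_zero, ← norm_neg, ← Complex.norm_two, ← norm_div]
        congr 1
        ring
    _ ≤ ε * (2 * (|a| + a ^ 2) * ∫ v, levyGauge v ∂π) := by
        have hneg := hexp (-a)
        rw [abs_neg, neg_sq] at hneg
        linarith [hexp a, norm_add_le (Complex.exp (ε * levyExponent π a) - 1)
          (Complex.exp (ε * levyExponent π (-a)) - 1)]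

lemma integrable_abs_add_sq_gaussianReal :
    Integrable (fun a : ℝ => |a| + a ^ 2) (gaussianReal 0 1) :=
  ((memLp_id_gaussianReal 1).integrable le_rfl).abs.add
    (memLp_id_gaussianReal 2).integrable_sq

lemma tendsto_inv_mul_charFun_gaussDamped [l.IsCountablyGenerated] [SFinite π]
    (hε : Tendsto ε l (𝓝[>] 0)) (hπ : Integrable levyGauge π)
    (hchar : ∀ᶠ i in l, ∀ θ, charFun (μ i) θ = Complex.exp (ε i * levyExponent π θ)) (θ : ℝ) :
    Tendsto (fun i => ((ε i)⁻¹ : ℂ) * charFun (gaussDamped (μ i)) θ) l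
      (𝓝 (charFun (gaussDamped π) θ)) := by
  rw [← integral_secondDifference_gaussian (integrable_gaussDefect hπ)]
  simp only [← integral_secondDifference_gaussian
    (integrable_gaussDefect_of_isFiniteMeasure (μ _)), ← integral_const_mul]
  refine tendsto_integral_filter_of_dominated_convergence
    (fun a => 2 * (|a| + a ^ 2) * ∫ v, levyGauge v ∂π) (.of_forall fun i => ?_) ?_
    ((integrable_abs_add_sq_gaussianReal.const_mul 2).mul_const _)
    (ae_of_all _ (tendsto_inv_mul_secondDifference hε hπ hchar θ))
  · simp only [secondDifference_eq_charFun]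
    fun_prop
  · filter_upwards [hchar, hε self_mem_nhdsWithin] with i hi (hεi : 0 < ε i)
    refine ae_of_all _ fun a => ?_
    rw [← Complex.ofReal_inv, norm_mul, Complex.norm_of_nonneg (inv_pos.2 hεi).le,
      inv_mul_le_iff₀ hεi]
    exact norm_secondDifference_le_of_charFun_eq_exp hεi.le hπ hi θ a

lemma exists_pos_forall_le_gaussDefect {F : Set ℝ} (hF : (0 : ℝ) ∉ closure F) :
    ∃ c > 0, ∀ v ∈ F, c ≤ gaussDefect v := by
  obtain ⟨δ, hδ, hball⟩ : ∃ δ > 0, ∀ v ∈ F, δ ≤ |v| := by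
    simpa [Metric.mem_closure_iff, Real.dist_eq] using hF
  refine ⟨gaussDefect δ, gaussDefect_pos hδ.ne', fun v hv => gaussDefect_le_of_abs_le ?_⟩
  rw [abs_of_pos hδ]
  exact hball v hv

lemma measure_ne_top_of_zero_notMem_closure (hπ : Integrable levyGauge π) {F : Set ℝ}
    (hF : (0 : ℝ) ∉ closure F) : π F ≠ ∞ := by
  obtain ⟨c, hc, hcF⟩ := exists_pos_forall_le_gaussDefect hF
  exact ((measure_mono hcF).trans_lt ((integrable_gaussDefect hπ).measure_ge_lt_top hc)).ne

lemma setLIntegral_inv_gaussDamped (m : Measure ℝ) {F : Set ℝ} (hFm : MeasurableSet F) {c : ℝ}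
    (hc : 0 < c) (hcF : ∀ v ∈ F, c ≤ gaussDefect v) :
    ∫⁻ v in F, ENNReal.ofReal (max c (gaussDefect v))⁻¹ ∂gaussDamped m = m F := by
  rw [gaussDamped, setLIntegral_withDensity_eq_setLIntegral_mul _ (by fun_prop) (by fun_prop) hFm,
    ← setLIntegral_one]
  refine setLIntegral_congr_fun hFm fun v hv => ?_
  rw [Pi.mul_apply, max_eq_right (hcF v hv), ← ENNReal.ofReal_mul (gaussDefect_nonneg v),
    mul_inv_cancel₀ (hc.trans_le (hcF v hv)).ne', ENNReal.ofReal_one]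

theorem tendsto_inv_mul_measureReal_of_charFun_eq_exp [l.IsCountablyGenerated] [SFinite π]
    (hε : Tendsto ε l (𝓝[>] 0)) (hπ : Integrable levyGauge π)
    (hchar : ∀ᶠ i in l, ∀ θ, charFun (μ i) θ = Complex.exp (ε i * levyExponent π θ))
    {F : Set ℝ} (hFm : MeasurableSet F) (hF0 : (0 : ℝ) ∉ closure F) (hF : π (frontier F) = 0) :
    Tendsto (fun i => (ε i)⁻¹ * (μ i).real F) l (𝓝 (π.real F)) := by
  obtain ⟨c, hc, hcF⟩ := exists_pos_forall_le_gaussDefect hF0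
  let weight : BoundedContinuousFunction ℝ ℝ :=
    .ofNormedAddCommGroup (fun v => (max c (gaussDefect v))⁻¹)
      (by fun_prop (disch := intros; positivity)) c⁻¹ fun v => by
        rw [Real.norm_of_nonneg (by positivity)]
        exact inv_anti₀ hc (le_max_left _ _)
  let ρ₀ : FiniteMeasure ℝ :=
    ⟨gaussDamped π, isFiniteMeasure_gaussDamped (integrable_gaussDefect hπ)⟩
  let ρ (i : ι) : FiniteMeasure ℝ := (ε i)⁻¹.toNNReal • ⟨gaussDamped (μ i),
    isFiniteMeasure_gaussDamped (integrable_gaussDefect_of_isFiniteMeasure (μ i))⟩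
  have hρcoe (i : ι) : (ρ i : Measure ℝ) = (ε i)⁻¹.toNNReal • gaussDamped (μ i) :=
    FiniteMeasure.toMeasure_smul _ _
  have hεpos : ∀ᶠ i in l, 0 < ε i := hε self_mem_nhdsWithin
  have hρ : Tendsto ρ l (𝓝 ρ₀) := by
    refine finiteMeasure_tendsto_of_tendsto_charFun fun θ => ?_
    refine (tendsto_inv_mul_charFun_gaussDamped hε hπ hchar θ).congr' ?_
    filter_upwards [hεpos] with i hi
    rw [hρcoe, charFun_apply, charFun_apply, integral_smul_nnreal_measure, NNReal.smul_def,
      Real.coe_toNNReal _ (inv_pos.2 hi).le, Complex.real_smul, Complex.ofReal_inv]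
  have hlim : Tendsto (fun i => ENNReal.ofReal (ε i)⁻¹ * μ i F) l (𝓝 (π F)) := by
    rw [← setLIntegral_inv_gaussDamped π hFm hc hcF]
    refine (finiteMeasure_tendsto_setLIntegral_of_null_frontier hρ weight.nnrealPart hFm
      (withDensity_absolutelyContinuous _ _ hF)).congr fun i => ?_
    rw [← setLIntegral_inv_gaussDamped (μ i) hFm hc hcF]
    rw [hρcoe, Measure.restrict_smul, ENNReal.smul_def, lintegral_smul_measure]
    rfl
  have hπF : π F ≠ ∞ := measure_ne_top_of_zero_notMem_closure hπ hF0
  refine ((ENNReal.tendsto_toReal hπF).comp hlim).congr' ?_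
  filter_upwards [hεpos] with i hi
  simp [Measure.real, ENNReal.toReal_ofReal (inv_pos.2 hi).le]

end SmallTime

section EffectiveLength

lemma measurable_ellK (t : ℝ) : Measurable fun p : ℝ × ℝ => ellK t p.1 p.2 := by
  unfold ellK
  fun_prop

instance muU.sFinite (γ : ℝ) : SFinite (muU γ) := by
  unfold muU
  infer_instance

instance muEll.sFinite (γ t : ℝ) : SFinite (muEll γ t) := by
  unfold muEll
  infer_instance

variable {γ t x : ℝ}

lemma le_ellK_iff (hx : 0 < x) (s u : ℝ) :
    x ≤ ellK t s u ↔ x ≤ t ∧ x ≤ u ∧ s ∈ Icc (x - u) (t - x) := by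
  simp only [ellK, le_max_iff, hx.not_ge, false_or, le_sub_iff_add_le, le_min_iff, mem_Icc,
    ← max_add_add_left, max_le_iff, sub_le_iff_le_add, add_zero]
  rw [add_comm x s, add_le_add_iff_left]
  tauto

lemma muEll_apply (γ t : ℝ) {A : Set ℝ} (hA : MeasurableSet A) (hA0 : A ⊆ Ioi 0) :
    muEll γ t A = ∫⁻ u in Ioi 0, ENNReal.ofReal (u ^ (-γ - 1)) * volume {s | ellK t s u ∈ A} := by
  have hpre := measurable_ellK t hA
  rw [muEll, Measure.restrict_apply hA, inter_eq_left.2 hA0,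
    Measure.map_apply (measurable_ellK t) hA, Measure.prod_apply_symm hpre, muU,
    lintegral_withDensity_eq_lintegral_mul _ (by fun_prop)
      (measurable_measure_prodMk_right hpre)]
  rfl

lemma volume_setOf_le_ellK (hx : 0 < x) (hxt : x ≤ t) (u : ℝ) :
    volume {s | x ≤ ellK t s u}
      = (Ici x).indicator (fun u => ENNReal.ofReal (t - 2 * x + u)) u := by
  by_cases hu : x ≤ u
  · simp only [le_ellK_iff hx, hxt, hu, true_and, ofPred_mem_eq, Real.volume_Icc,
      indicator_of_mem (mem_Ici.2 hu)]
    ring_nf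
  · simp [le_ellK_iff hx, hu]

lemma muEll_Ici_of_lt (γ : ℝ) (hx : 0 < x) (htx : t < x) : muEll γ t (Ici x) = 0 := by
  rw [muEll_apply γ t measurableSet_Ici (Ici_subset_Ioi.2 hx)]
  simp [le_ellK_iff hx, htx.not_ge]

lemma rpow_neg_sub_one_mul_const_add {u : ℝ} (hu : 0 < u) (γ a : ℝ) :
    u ^ (-γ - 1) * (a + u) = a * u ^ (-γ - 1) + u ^ (-γ) := by
  rw [mul_add, ← Real.rpow_add_one hu.ne', sub_add_cancel, mul_comm]

lemma integrableOn_Ioi_rpow_mul_const_add (hγ : 1 < γ) (hx : 0 < x) (a : ℝ) :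
    IntegrableOn (fun u : ℝ => u ^ (-γ - 1) * (a + u)) (Ioi x) :=
  IntegrableOn.congr_fun
    (((integrableOn_Ioi_rpow_of_lt (a := -γ - 1) (by linarith) hx).const_mul a).add
      (integrableOn_Ioi_rpow_of_lt (a := -γ) (by linarith) hx))
    (fun _ hu => (rpow_neg_sub_one_mul_const_add (hx.trans hu) γ a).symm) measurableSet_Ioi

lemma integral_Ioi_rpow_mul_const_add (hγ : 1 < γ) (hx : 0 < x) (a : ℝ) :
    ∫ u in Ioi x, u ^ (-γ - 1) * (a + u) = a * (x ^ (-γ) / γ) + x ^ (1 - γ) / (γ - 1) := by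
  rw [setIntegral_congr_fun measurableSet_Ioi fun u hu =>
      rpow_neg_sub_one_mul_const_add (hx.trans hu) γ a,
    integral_add ((integrableOn_Ioi_rpow_of_lt (by linarith) hx).const_mul a)
      (integrableOn_Ioi_rpow_of_lt (by linarith) hx),
    integral_const_mul, integral_Ioi_rpow_of_lt (by linarith) hx,
    integral_Ioi_rpow_of_lt (by linarith) hx, sub_add_cancel, neg_div_neg_eq,
    neg_add_eq_sub, ← neg_sub γ 1, neg_div_neg_eq]

lemma muEll_Ici (hγ : 1 < γ) (hx : 0 < x) (hxt : x ≤ t) :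
    muEll γ t (Ici x)
      = ENNReal.ofReal ((t - 2 * x) * (x ^ (-γ) / γ) + x ^ (1 - γ) / (γ - 1)) := by
  have hnonneg (u : ℝ) (hu : x < u) : 0 ≤ u ^ (-γ - 1) * (t - 2 * x + u) :=
    mul_nonneg (Real.rpow_nonneg (hx.trans hu).le _) (by linarith)
  calc muEll γ t (Ici x)
      = ∫⁻ u in Ioi 0, (Ici x).indicator
          (fun u => ENNReal.ofReal (u ^ (-γ - 1) * (t - 2 * x + u))) u := by
        rw [muEll_apply γ t measurableSet_Ici (Ici_subset_Ioi.2 hx)]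
        refine setLIntegral_congr_fun measurableSet_Ioi fun u (hu : 0 < u) => ?_
        simp only [mem_Ici, volume_setOf_le_ellK hx hxt, indicator_apply, mul_ite, mul_zero,
          ENNReal.ofReal_mul (Real.rpow_nonneg hu.le _)]
    _ = ∫⁻ u in Ioi x, ENNReal.ofReal (u ^ (-γ - 1) * (t - 2 * x + u)) := by
        rw [setLIntegral_indicator measurableSet_Ici, inter_eq_left.2 (Ici_subset_Ioi.2 hx),
          ← restrict_Ioi_eq_restrict_Ici]
    _ = _ := by
        rw [← ofReal_integral_eq_lintegral_ofReal
          (integrableOn_Ioi_rpow_mul_const_add hγ hx _)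
          (ae_restrict_of_forall_mem measurableSet_Ioi hnonneg),
          integral_Ioi_rpow_mul_const_add hγ hx]

lemma muEll_one_Ici (hγ : 1 < γ) (hx : 0 < x) (hx1 : x ≤ 1) :
    muEll γ 1 (Ici x)
      = ENNReal.ofReal (x ^ (-γ) / γ + (2 - γ) / ((γ - 1) * γ) * x ^ (1 - γ)) := by
  have hγ0 : γ ≠ 0 := by positivity
  have hγ1 : γ - 1 ≠ 0 := (sub_pos.2 hγ).ne'
  rw [muEll_Ici hγ hx hx1, sub_eq_neg_add 1 γ, Real.rpow_add_one hx.ne']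
  congr 1
  field_simp
  ring

lemma muEll_Ici_le (hγ : 1 < γ) (hx : 0 < x) :
    muEll γ t (Ici x) ≤ ENNReal.ofReal (t * (1 / γ + 1 / (γ - 1)) * x ^ (-γ)) := by
  have : 0 < γ := one_pos.trans hγ
  have : 0 < γ - 1 := sub_pos.2 hγ
  rcases lt_or_ge t x with htx | hxt
  · simp [muEll_Ici_of_lt γ hx htx]
  rw [muEll_Ici hγ hx hxt]
  have hpow : x ^ (1 - γ) ≤ t * x ^ (-γ) := by
    rw [sub_eq_neg_add, Real.rpow_add_one hx.ne', mul_comm]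
    gcongr
  refine ENNReal.ofReal_le_ofReal ?_
  calc (t - 2 * x) * (x ^ (-γ) / γ) + x ^ (1 - γ) / (γ - 1)
      ≤ t * (x ^ (-γ) / γ) + t * x ^ (-γ) / (γ - 1) := by gcongr; linarith
    _ = t * (1 / γ + 1 / (γ - 1)) * x ^ (-γ) := by ring

lemma muEll_singleton (γ : ℝ) (hx : 0 < x) (hxt : x ≠ t) : muEll γ t {x} = 0 := by
  rw [muEll_apply γ t (measurableSet_singleton x) (singleton_subset_iff.2 hx)]
  refine lintegral_eq_zero_of_ae_eq_zero ?_
  filter_upwards [ae_restrict_of_ae (Measure.ae_ne volume x)] with u hu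
  have hsub : {s | ellK t s u ∈ ({x} : Set ℝ)} ⊆ {x - u, t - x} := by
    rintro s (hs : max 0 (min (s + u) t - max s 0) = x)
    grind
  rw [measure_mono_null hsub ((finite_singleton _).insert _ |>.measure_zero _), mul_zero,
    Pi.zero_apply]

lemma muEll_Iic_zero (γ t : ℝ) : muEll γ t (Iic 0) = 0 := by
  rw [muEll, Measure.restrict_apply measurableSet_Iic, Iic_inter_Ioi, Ioc_self, measure_empty]

end EffectiveLength

section RewardedLength

variable {γ t x : ℝ} {FR : Measure ℝ}

lemma ae_pos_muEllR (γ t : ℝ) (FR : Measure ℝ) : ∀ᵐ v ∂muEllR γ t FR, 0 < v :=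
  ae_restrict_mem measurableSet_Ioi

lemma integrableOn_rpow_sub_one_Ici (hmom : IntegrableOn (fun r => r ^ γ) (Ioi 0) FR)
    (hx : 0 < x) : IntegrableOn (fun r => r ^ (γ - 1)) (Ici x) FR := by
  refine ((hmom.mono_set (Ici_subset_Ioi.2 hx)).const_mul x⁻¹).mono' (by fun_prop) ?_
  refine ae_restrict_of_forall_mem measurableSet_Ici fun r (hr : x ≤ r) => ?_
  have hr0 : 0 < r := hx.trans_le hr
  rw [Real.norm_of_nonneg (Real.rpow_nonneg hr0.le _), Real.rpow_sub_one hr0.ne',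
    div_eq_inv_mul]
  gcongr

instance muEllR.sFinite (γ t : ℝ) (FR : Measure ℝ) [SFinite FR] : SFinite (muEllR γ t FR) := by
  unfold muEllR
  infer_instance

lemma muEllR_apply (γ t : ℝ) (FR : Measure ℝ) [SFinite FR] {A : Set ℝ} (hA : MeasurableSet A)
    (hA0 : A ⊆ Ioi 0) : muEllR γ t FR A = ∫⁻ r in Ioi 0, muEll γ t ((r * ·) ⁻¹' A) ∂FR := by
  have hmul : Measurable fun p : ℝ × ℝ => p.1 * p.2 := by fun_prop
  rw [muEllR, Measure.restrict_apply hA, inter_eq_left.2 hA0, Measure.map_apply hmul hA,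
    Measure.prod_apply (hmul hA), ← lintegral_indicator measurableSet_Ioi]
  refine lintegral_congr fun r => ?_
  by_cases hr : 0 < r
  · rw [indicator_of_mem (mem_Ioi.2 hr)]
    rfl
  · rw [indicator_of_notMem (by exact hr)]
    refine measure_mono_null (fun l hl => ?_) (muEll_Iic_zero γ t)
    exact not_lt.1 fun hl0 => (hA0 hl).not_ge (mul_nonpos_of_nonpos_of_nonneg (not_lt.1 hr) hl0.le)

lemma muEllR_Ici_eq_lintegral (γ t : ℝ) (FR : Measure ℝ) [SFinite FR] (hx : 0 < x) :
    muEllR γ t FR (Ici x) = ∫⁻ r in Ioi 0, muEll γ t (Ici (x / r)) ∂FR := by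
  rw [muEllR_apply γ t FR measurableSet_Ici (Ici_subset_Ioi.2 hx)]
  refine setLIntegral_congr_fun measurableSet_Ioi fun r (hr : 0 < r) => ?_
  rw [preimage_const_mul_Ici₀ _ hr]

variable [SFinite FR]

lemma muEllR_Ici_le (hγ : 1 < γ) (ht : 0 ≤ t)
    (hmom : IntegrableOn (fun r => r ^ γ) (Ioi 0) FR) (hx : 0 < x) :
    muEllR γ t FR (Ici x)
      ≤ ENNReal.ofReal (t * (1 / γ + 1 / (γ - 1)) * (∫ r in Ioi 0, r ^ γ ∂FR) * x ^ (-γ)) := by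
  have : 0 < γ - 1 := sub_pos.2 hγ
  set C := t * (1 / γ + 1 / (γ - 1))
  have : 0 ≤ C := by positivity
  rw [muEllR_Ici_eq_lintegral γ t FR hx]
  calc ∫⁻ r in Ioi 0, muEll γ t (Ici (x / r)) ∂FR
      ≤ ∫⁻ r in Ioi 0, ENNReal.ofReal (C * x ^ (-γ) * r ^ γ) ∂FR := by
        refine setLIntegral_mono' measurableSet_Ioi fun r (hr : 0 < r) => ?_
        convert muEll_Ici_le hγ (div_pos hx hr) using 2
        rw [Real.div_rpow hx.le hr.le, Real.rpow_neg hr.le γ, div_inv_eq_mul, mul_assoc]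
    _ = ENNReal.ofReal (C * x ^ (-γ) * ∫ r in Ioi 0, r ^ γ ∂FR) := by
        rw [← integral_const_mul, ofReal_integral_eq_lintegral_ofReal (hmom.const_mul _)]
        exact ae_restrict_of_forall_mem measurableSet_Ioi fun r (hr : 0 < r) => by positivity
    _ = _ := by rw [mul_right_comm]

lemma measureReal_muEllR_one_Ici (hγ1 : 1 < γ) (hγ2 : γ ≤ 2)
    (hmom : IntegrableOn (fun r => r ^ γ) (Ioi 0) FR) {κ : ℝ} (hκ : 0 < κ) :
    (muEllR γ 1 FR).real (Ici κ)
      = κ ^ (-γ) / γ * (∫ r in Ici κ, r ^ γ ∂FR)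
        + (2 - γ) * κ ^ (1 - γ) / ((γ - 1) * γ) * ∫ r in Ici κ, r ^ (γ - 1) ∂FR := by
  have : 0 < γ - 1 := sub_pos.2 hγ1
  have : 0 ≤ 2 - γ := sub_nonneg.2 hγ2
  set a := κ ^ (-γ) / γ
  set b := (2 - γ) * κ ^ (1 - γ) / ((γ - 1) * γ)
  have htail : EqOn (fun r => muEll γ 1 (Ici (κ / r)))
      ((Ici κ).indicator fun r => ENNReal.ofReal (a * r ^ γ + b * r ^ (γ - 1))) (Ioi 0) := by
    intro r (hr : 0 < r)
    have hκr : 0 < κ / r := div_pos hκ hr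
    rcases lt_or_ge r κ with hrκ | hκr'
    · rw [indicator_of_notMem (by simpa using hrκ)]
      exact muEll_Ici_of_lt γ hκr ((one_lt_div hr).2 hrκ)
    · rw [indicator_of_mem (mem_Ici.2 hκr')]
      simp only [muEll_one_Ici hγ1 hκr ((div_le_one hr).2 hκr')]
      rw [Real.div_rpow hκ.le hr.le, Real.div_rpow hκ.le hr.le, Real.rpow_neg hr.le,
        ← neg_sub γ 1, Real.rpow_neg hr.le (γ - 1), div_inv_eq_mul, div_inv_eq_mul]
      congr 1
      simp only [a, b, neg_sub]
      ring
  rw [← integral_const_mul, ← integral_const_mul, ← integral_add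
    ((hmom.mono_set (Ici_subset_Ioi.2 hκ)).const_mul a)
    ((integrableOn_rpow_sub_one_Ici hmom hκ).const_mul b), integral_eq_lintegral_of_nonneg_ae
    (ae_restrict_of_forall_mem measurableSet_Ici fun r (hr : κ ≤ r) => ?_) (by fun_prop),
    Measure.real, muEllR_Ici_eq_lintegral γ 1 FR hκ,
    setLIntegral_congr_fun measurableSet_Ioi htail, setLIntegral_indicator measurableSet_Ici,
    inter_eq_left.2 (Ici_subset_Ioi.2 hκ)]
  have hr0 : 0 < r := hκ.trans_le hr
  simp only [Pi.zero_apply]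
  positivity

lemma muEllR_one_singleton (γ : ℝ) {κ : ℝ} (hκ : 0 < κ) (hatom : FR {κ} = 0) :
    muEllR γ 1 FR {κ} = 0 := by
  rw [muEllR_apply γ 1 FR (measurableSet_singleton κ) (singleton_subset_iff.2 hκ)]
  refine lintegral_eq_zero_of_ae_eq_zero ?_
  filter_upwards [ae_restrict_mem measurableSet_Ioi,
    ae_restrict_of_ae (measure_eq_zero_iff_ae_notMem.1 hatom)] with r (hr : 0 < r) hrκ
  have hpre : (r * ·) ⁻¹' {κ} = {κ / r} := by
    ext l
    rw [mem_preimage, mem_singleton_iff, mem_singleton_iff, eq_div_iff hr.ne', mul_comm]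
  rw [hpre, muEll_singleton γ (div_pos hκ hr) fun h => hrκ ((div_eq_one_iff_eq hr.ne').1 h).symm,
    Pi.zero_apply]

end RewardedLength

section GaugeIntegrability

lemma levyGauge_le_two_mul_integral_min {v : ℝ} (hv : 0 ≤ v) :
    levyGauge v ≤ 2 * ∫ s in (0 : ℝ)..v, min 1 s := by
  rcases hv.eq_or_lt with rfl | hv
  · simp [levyGauge]
  have hchord (s : ℝ) (hs : s ∈ Icc 0 v) : min 1 v / v * s ≤ min 1 s := by
    rw [div_mul_eq_mul_div, div_le_iff₀ hv, min_mul_of_nonneg _ _ hv.le, one_mul]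
    refine le_min ?_ ?_
    · exact mul_le_mul (min_le_left _ _) hs.2 hs.1 zero_le_one |>.trans_eq (one_mul v)
    · rw [mul_comm s]
      exact mul_le_mul_of_nonneg_right (min_le_right _ _) hs.1
  calc levyGauge v = 2 * ∫ s in (0 : ℝ)..v, min 1 v / v * s := by
        rw [intervalIntegral.integral_const_mul, integral_id, levyGauge, abs_of_pos hv,
          show min v (v ^ 2) = min 1 v * v by rw [min_mul_of_nonneg _ _ hv.le, one_mul, sq]]
        field_simp
        ring
    _ ≤ 2 * ∫ s in (0 : ℝ)..v, min 1 s := by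
        gcongr
        exact intervalIntegral.integral_mono_on hv.le
          (Continuous.intervalIntegrable (by fun_prop) _ _)
          (Continuous.intervalIntegrable (by fun_prop) _ _) hchord

lemma integrableOn_Ioi_rpow_neg_mul_min {γ : ℝ} (hγ1 : 1 < γ) (hγ2 : γ < 2) :
    IntegrableOn (fun s : ℝ => s ^ (-γ) * min 1 s) (Ioi 0) := by
  rw [← Ioc_union_Ioi_eq_Ioi zero_le_one]
  refine IntegrableOn.union ?_ ?_
  · have hnear : IntegrableOn (fun s : ℝ => s ^ (-γ + 1)) (Ioc 0 1) :=
      (intervalIntegrable_iff_integrableOn_Ioc_of_le zero_le_one).1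
        (intervalIntegral.intervalIntegrable_rpow' (by linarith))
    refine hnear.congr_fun (fun s hs => ?_) measurableSet_Ioc
    simp only [min_eq_right hs.2, Real.rpow_add_one hs.1.ne']
  · refine (integrableOn_Ioi_rpow_of_lt (a := -γ) (by linarith) one_pos).congr_fun
      (fun s (hs : 1 < s) => ?_) measurableSet_Ioi
    simp only [min_eq_left hs.le, mul_one]

lemma integrable_levyGauge_of_measure_Ici_le {π : Measure ℝ} (hpos : ∀ᵐ v ∂π, 0 ≤ v)
    {γ C : ℝ} (hγ1 : 1 < γ) (hγ2 : γ < 2)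
    (htail : ∀ x > 0, π (Ici x) ≤ ENNReal.ofReal (C * x ^ (-γ))) : Integrable levyGauge π := by
  refine ⟨by unfold levyGauge; fun_prop, ?_⟩
  rw [hasFiniteIntegral_iff_ofReal (ae_of_all _ levyGauge_nonneg)]
  calc ∫⁻ v, ENNReal.ofReal (levyGauge v) ∂π
      ≤ ∫⁻ v, 2 * ENNReal.ofReal (∫ s in (0 : ℝ)..v, min 1 s) ∂π := by
        refine lintegral_mono_ae (hpos.mono fun v hv => ?_)
        rw [← ENNReal.ofReal_ofNat, ← ENNReal.ofReal_mul zero_le_two]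
        exact ENNReal.ofReal_le_ofReal (levyGauge_le_two_mul_integral_min hv)
    _ = 2 * ∫⁻ s in Ioi 0, π (Ici s) * ENNReal.ofReal (min 1 s) := by
        rw [lintegral_const_mul' _ _ ENNReal.ofNat_ne_top]
        congr 1
        exact lintegral_comp_eq_lintegral_meas_le_mul (f := id) (g := min 1) π hpos aemeasurable_id
          (fun v _ => Continuous.intervalIntegrable (by fun_prop) _ _)
          (ae_restrict_of_forall_mem measurableSet_Ioi fun s (hs : 0 < s) =>
            le_min zero_le_one hs.le)
    _ ≤ 2 * ∫⁻ s in Ioi 0, ENNReal.ofReal (C * (s ^ (-γ) * min 1 s)) := by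
        gcongr 2 * ?_
        refine setLIntegral_mono' measurableSet_Ioi fun s (hs : 0 < s) => ?_
        rw [← mul_assoc, ENNReal.ofReal_mul' (le_min zero_le_one hs.le)]
        gcongr
        exact htail s hs
    _ < ∞ := ENNReal.mul_lt_top ENNReal.ofNat_lt_top
        ((integrableOn_Ioi_rpow_neg_mul_min hγ1 hγ2).const_mul C).lintegral_lt_top

lemma integrable_levyGauge_muEllR {γ t : ℝ} (hγ1 : 1 < γ) (hγ2 : γ < 2) (ht : 0 ≤ t)
    {FR : Measure ℝ} [SFinite FR] (hmom : IntegrableOn (fun r => r ^ γ) (Ioi 0) FR) :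
    Integrable levyGauge (muEllR γ t FR) :=
  integrable_levyGauge_of_measure_Ici_le ((ae_pos_muEllR γ t FR).mono fun _ => le_of_lt) hγ1 hγ2
    fun _ => muEllR_Ici_le hγ1 ht hmom

end GaugeIntegrability

section Scaling

lemma withDensity_comp_map {α β : Type*} [MeasurableSpace α] [MeasurableSpace β] (m : Measure α)
    {f : α → β} (hf : Measurable f) {g : β → ℝ≥0∞} (hg : Measurable g) :
    (m.withDensity (g ∘ f)).map f = (m.map f).withDensity g := by
  ext A hA
  rw [Measure.map_apply hf hA, withDensity_apply _ (hf hA), withDensity_apply _ hA,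
    setLIntegral_map hA hg hf]
  rfl

variable (γ : ℝ) {t : ℝ} (ht : 0 < t)
include ht

lemma map_mul_left_restrict_Ioi_zero (m : Measure ℝ) :
    (m.restrict (Ioi 0)).map (t * ·) = (m.map (t * ·)).restrict (Ioi 0) := by
  rw [Measure.restrict_map (measurable_const_mul t) measurableSet_Ioi,
    preimage_const_mul_Ioi₀ _ ht, zero_div]

lemma map_mul_left_muU : (muU γ).map (t * ·) = ENNReal.ofReal (t ^ γ) • muU γ := by
  set density : ℝ → ℝ≥0∞ := fun u => ENNReal.ofReal (u ^ (-γ - 1))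
  have hdensity : Measurable density := by fun_prop
  have hhom : density =ᵐ[volume.restrict (Ioi 0)]
      ENNReal.ofReal (t ^ (γ + 1)) • (density ∘ (t * ·)) := by
    refine ae_restrict_of_forall_mem measurableSet_Ioi fun u (hu : 0 < u) => ?_
    simp only [density, Pi.smul_apply, Function.comp_apply, smul_eq_mul]
    rw [← ENNReal.ofReal_mul (by positivity), Real.mul_rpow ht.le hu.le, ← mul_assoc,
      ← Real.rpow_add ht, add_add_sub_cancel, add_neg_cancel, Real.rpow_zero, one_mul]
  calc (muU γ).map (t * ·)
      = ENNReal.ofReal (t ^ (γ + 1)) •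
          ((volume.restrict (Ioi 0)).map (t * ·)).withDensity density := by
        rw [← withDensity_comp_map _ (measurable_const_mul t) hdensity, ← Measure.map_smul,
          ← withDensity_smul _ (hdensity.comp (measurable_const_mul t)), muU,
          withDensity_congr_ae hhom]
    _ = ENNReal.ofReal (t ^ (γ + 1)) • ENNReal.ofReal t⁻¹ • muU γ := by
        rw [map_mul_left_restrict_Ioi_zero ht, Real.map_volume_mul_left ht.ne',
          Measure.restrict_smul, withDensity_smul_measure, abs_of_pos (inv_pos.2 ht)]
        rfl
    _ = ENNReal.ofReal (t ^ γ) • muU γ := by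
        rw [smul_smul, ← ENNReal.ofReal_mul (by positivity), Real.rpow_add_one ht.ne',
          mul_inv_cancel_right₀ ht.ne']

lemma ellK_mul (s u : ℝ) : ellK t (t * s) (t * u) = t * ellK 1 s u := by
  simp only [ellK, mul_max_of_nonneg _ _ ht.le, mul_sub, mul_min_of_nonneg _ _ ht.le, mul_add,
    mul_zero, mul_one]

lemma map_mul_left_muEll :
    (muEll γ 1).map (t * ·) = ENNReal.ofReal (t ^ (γ - 1)) • muEll γ t := by
  have hmul : Measurable (t * · : ℝ → ℝ) := measurable_const_mul t
  have hprod : ((volume : Measure ℝ).prod (muU γ)).map (Prod.map (t * ·) (t * ·))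
      = ENNReal.ofReal (t ^ (γ - 1)) • (volume : Measure ℝ).prod (muU γ) := by
    rw [← Measure.map_prod_map _ _ hmul hmul, map_mul_left_muU γ ht,
      Real.map_volume_mul_left ht.ne', Measure.prod_smul_right, Measure.prod_smul_left, smul_smul,
      ← ENNReal.ofReal_mul (by positivity), abs_of_pos (inv_pos.2 ht), Real.rpow_sub_one ht.ne']
    rfl
  rw [muEll, muEll, map_mul_left_restrict_Ioi_zero ht, Measure.map_map hmul (measurable_ellK 1),
    ← Measure.restrict_smul, ← Measure.map_smul, ← hprod,
    Measure.map_map (measurable_ellK t) (hmul.prodMap hmul)]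
  congr 2
  ext p
  exact (ellK_mul ht p.1 p.2).symm

variable (FR : Measure ℝ) [SFinite FR]

lemma map_mul_left_muEllR :
    (muEllR γ 1 FR).map (t * ·) = ENNReal.ofReal (t ^ (γ - 1)) • muEllR γ t FR := by
  have hmul : Measurable (t * · : ℝ → ℝ) := measurable_const_mul t
  have hreward : Measurable fun p : ℝ × ℝ => p.1 * p.2 := by fun_prop
  have hprod : (FR.prod (muEll γ 1)).map (Prod.map id (t * ·))
      = ENNReal.ofReal (t ^ (γ - 1)) • FR.prod (muEll γ t) := by
    rw [← Measure.map_prod_map _ _ measurable_id hmul, Measure.map_id, map_mul_left_muEll γ ht,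
      Measure.prod_smul_right]
  rw [muEllR, muEllR, map_mul_left_restrict_Ioi_zero ht, Measure.map_map hmul hreward,
    ← Measure.restrict_smul, ← Measure.map_smul, ← hprod,
    Measure.map_map hreward (measurable_id.prodMap hmul)]
  congr 2
  ext p
  exact mul_left_comm _ _ _

lemma levyExponent_muEllR_div (θ : ℝ) :
    levyExponent (muEllR γ t FR) (θ / t)
      = (t ^ (1 - γ) : ℝ) * levyExponent (muEllR γ 1 FR) θ := by
  have hdilate : levyExponent (muEllR γ 1 FR) θ
      = levyExponent ((muEllR γ 1 FR).map (t * ·)) (θ / t) := by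
    rw [levyExponent, levyExponent, integral_map (by fun_prop) (by fun_prop)]
    simp only [← Complex.ofReal_mul, ← mul_assoc, div_mul_cancel₀ _ ht.ne']
  rw [hdilate, map_mul_left_muEllR γ ht, levyExponent, levyExponent, integral_smul_measure,
    ENNReal.toReal_ofReal (by positivity), Complex.real_smul, ← mul_assoc, ← Complex.ofReal_mul,
    ← Real.rpow_add ht, sub_add_sub_cancel, sub_self, Real.rpow_zero, Complex.ofReal_one, one_mul]

end Scaling

section LargeDeviations

variable {Ω : Type*} [MeasurableSpace Ω] {P : Measure Ω} {γ Q : ℝ} {FR : Measure ℝ} [SFinite FR]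

lemma charFun_map_div_of_telecom {X : Ω → ℝ} (hX : AEMeasurable X P) {t : ℝ} (ht : 0 < t)
    (hchar : ∀ θ : ℝ, ∫ ω, Complex.exp (θ * X ω * Complex.I) ∂P
      = Complex.exp (Q * levyExponent (muEllR γ t FR) θ)) (θ : ℝ) :
    charFun (P.map fun ω => X ω / t) θ
      = Complex.exp ((Q * t ^ (1 - γ) : ℝ) * levyExponent (muEllR γ 1 FR) θ) := by
  rw [charFun_apply_real, integral_map (hX.div_const t) (by fun_prop), Complex.ofReal_mul,
    mul_assoc, ← levyExponent_muEllR_div γ ht FR, ← hchar]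
  refine integral_congr_ae (ae_of_all _ fun ω => ?_)
  push_cast
  ring_nf

lemma tendsto_const_mul_rpow_one_sub (hγ : 1 < γ) (hQ : 0 < Q) :
    Tendsto (fun t : ℝ => Q * t ^ (1 - γ)) atTop (𝓝[>] 0) := by
  refine tendsto_nhdsWithin_iff.2 ⟨?_, ?_⟩
  · simpa using (tendsto_rpow_neg_atTop (sub_pos.2 hγ)).const_mul Q
  · filter_upwards [eventually_gt_atTop 0] with t ht
    exact mul_pos hQ (Real.rpow_pos_of_pos ht _)

theorem tendsto_measureReal_div_mem_of_telecom (hγ1 : 1 < γ) (hγ2 : γ < 2) (hQ : 0 < Q)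
    (hmom : IntegrableOn (fun r => r ^ γ) (Ioi 0) FR) [IsFiniteMeasure P] {Y : ℝ → Ω → ℝ}
    (hY : ∀ t, AEMeasurable (Y t) P)
    (hchar : ∀ t : ℝ, 0 < t → ∀ θ : ℝ, ∫ ω, Complex.exp (θ * Y t ω * Complex.I) ∂P
      = Complex.exp (Q * levyExponent (muEllR γ t FR) θ))
    {F : Set ℝ} (hFm : MeasurableSet F) (hF0 : (0 : ℝ) ∉ closure F)
    (hF : muEllR γ 1 FR (frontier F) = 0) :
    Tendsto (fun t => P.real {ω | Y t ω / t ∈ F} / t ^ (-(γ - 1))) atTop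
      (𝓝 (Q * (muEllR γ 1 FR).real F)) := by
  have hlim := tendsto_inv_mul_measureReal_of_charFun_eq_exp
    (μ := fun t => P.map fun ω => Y t ω / t) (tendsto_const_mul_rpow_one_sub hγ1 hQ)
    (integrable_levyGauge_muEllR hγ1 hγ2 zero_le_one hmom)
    ((eventually_gt_atTop 0).mono fun t ht => charFun_map_div_of_telecom (hY t) ht (hchar t ht))
    hFm hF0 hF
  refine (hlim.const_mul Q).congr fun t => ?_
  rw [map_measureReal_apply_of_aemeasurable ((hY t).div_const t) hFm, neg_sub, mul_inv, mul_assoc,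
    mul_inv_cancel_left₀ hQ.ne', inv_mul_eq_div]
  rfl

end LargeDeviations

theorem stmt_2_general (γ Q : ℝ) (hγ1 : 1 < γ) (hγ2 : γ < 2) (hQ : 0 < Q)
    (FR : Measure ℝ) [SFinite FR] (hmom : IntegrableOn (fun r => r ^ γ) (Ioi 0) FR)
    (Ω : Type*) [MeasurableSpace Ω] (P : Measure Ω) [IsFiniteMeasure P]
    (Y : ℝ → Ω → ℝ) (hYmeas : ∀ t, AEMeasurable (Y t) P)
    (hYchar : ∀ t : ℝ, 0 < t → ∀ θ : ℝ,
      ∫ ω, Complex.exp (θ * Y t ω * Complex.I) ∂P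
        = Complex.exp (Q * levyExponent (muEllR γ t FR) θ))
    (κ : ℝ) (hκ : 0 < κ) (hκatom : FR {κ} = 0) :
    Tendsto (fun t => P.real {ω | κ * t ≤ Y t ω} / t ^ (-(γ - 1))) atTop
      (𝓝 (Q * (κ ^ (-γ) / γ * (∫ r in Ici κ, r ^ γ ∂FR)
        + (2 - γ) * κ ^ (1 - γ) / ((γ - 1) * γ) * (∫ r in Ici κ, r ^ (γ - 1) ∂FR)))) := by
  have hzero : (0 : ℝ) ∉ closure (Ici κ) := by simpa using hκ
  have hfrontier : muEllR γ 1 FR (frontier (Ici κ)) = 0 := by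
    rw [frontier_Ici]
    exact muEllR_one_singleton γ hκ hκatom
  rw [← measureReal_muEllR_one_Ici hγ1 hγ2.le hmom hκ]
  refine (tendsto_measureReal_div_mem_of_telecom hγ1 hγ2 hQ hmom hYmeas hYchar measurableSet_Ici
    hzero hfrontier).congr' ?_
  filter_upwards [eventually_gt_atTop 0] with t ht
  simp only [mem_Ici, le_div_iff₀ ht]

/-- Intermediate large deviations: if `P(R ≥ κ) > 0` and `P(R = κ) = 0`, then
`P(Y_t ≥ κt) = Q·D_I^{(1)}(κ)·t^{-(γ-1)}·(1+o(1))` as `t → ∞`, where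
`D_I^{(1)}(κ) = (κ^{-γ}/γ)E[R^γ 1{R ≥ κ}] + ((2-γ)κ^{1-γ}/((γ-1)γ))E[R^{γ-1} 1{R ≥ κ}]`. -/
theorem stmt_2 (γ Q : ℝ) (hγ1 : 1 < γ) (hγ2 : γ < 2) (hQ : 0 < Q)
    (FR : Measure ℝ) [IsProbabilityMeasure FR] (hFRpos : FR (Set.Iic 0) = 0)
    (hmom : Integrable (fun r => r ^ γ) FR)
    (Ω : Type*) [MeasurableSpace Ω] (P : Measure Ω) [IsProbabilityMeasure P]
    (Y : ℝ → Ω → ℝ) (hYmeas : ∀ t, Measurable (Y t))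
    (hYchar : ∀ t : ℝ, 0 < t → ∀ θ : ℝ,
      ∫ ω, Complex.exp (θ * Y t ω * Complex.I) ∂P
        = Complex.exp (Q * ∫ v, (Complex.exp (θ * v * Complex.I) - 1 - θ * v * Complex.I)
            ∂(muEllR γ t FR)))
    (κ : ℝ) (hκ : 0 < κ) (hκpos : FR (Set.Ici κ) ≠ 0) (hκatom : FR {κ} = 0) :
    Tendsto (fun t => (P {ω | κ * t ≤ Y t ω}).toReal / t ^ (-(γ - 1)))
      atTop
      (𝓝 (Q * (κ ^ (-γ) / γ * (∫ r in Set.Ici κ, r ^ γ ∂FR)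
        + (2 - γ) * κ ^ (1 - γ) / ((γ - 1) * γ) * (∫ r in Set.Ici κ, r ^ (γ - 1) ∂FR)))) := by
  exact stmt_2_general γ Q hγ1 hγ2 hQ FR hmom.integrableOn Ω P Y
    (fun t => (hYmeas t).aemeasurable) hYchar κ hκ hκatom
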